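/- Let n ≥ 1 and let G be a subgroup of S_n. Then the semigroup ⟨G,a⟩∖G is idempotent generated for every singular transformation a ∈ T_n∖S_n if and only if the semigroup ⟨a^g | g ∈ G⟩ is idempotent generated for every singular transformation a ∈ T_n∖S_n. -/

import Mathlib

/-!
Pushing group elements to the right past `a`, at the cost of conjugating `a`, shows that
`⟨G, a⟩ ∖ G` is the product `⟨a^g | g ∈ G⟩ G` when `a` is singular; this product avoids `G` because
the first `a` in an injective word is injective and the last `a` in a surjective word is surjective.
An idempotent `e = s h` of the product lies in `⟨a^g | g ∈ G⟩`: pushing to the right in `e = e ^ m`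
gives `e = t h ^ m` with `t ∈ ⟨a^g | g ∈ G⟩`, and `m` may be taken to be the order of `h`.
So a factorization into idempotents of `⟨G, a⟩ ∖ G` already takes place in `⟨a^g | g ∈ G⟩`.

Conversely, every `u ∈ ⟨G, a⟩ ∖ G` is singular and lies in `⟨u^g | g ∈ G⟩ ⊆ ⟨G, a⟩ ∖ G`, where it
is a product of idempotents if `⟨u^g | g ∈ G⟩` is idempotent generated.
-/

open Finset

/-- Transformations of a set `α`, composed left-to-right (acting on the right):
`x (a * b) = (x a) b`. -/
structure Transf (α : Type*) where
  toFun : α → α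

namespace Transf

variable {α : Type*}

instance : Semigroup (Transf α) where
  mul a b := ⟨fun x => b.toFun (a.toFun x)⟩
  mul_assoc _ _ _ := rfl

/-- The transformation induced by a permutation. -/
def ofPerm (g : Equiv.Perm α) : Transf α := ⟨g⟩

/-- The rank of a transformation: the cardinality of its image. -/
noncomputable def rank (a : Transf α) : ℕ := Set.ncard (Set.range a.toFun)

end Transf

/-- The subsemigroup `⟨G, a⟩` generated by `G ∪ {a}`. -/
def genGA {α : Type*} (G : Subgroup (Equiv.Perm α)) (a : Transf α) :
    Subsemigroup (Transf α) :=
  Subsemigroup.closure (insert a (Transf.ofPerm '' (G : Set (Equiv.Perm α))))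

/-- The set `⟨G, a⟩ ∖ G`. -/
def genGAminusG {α : Type*} (G : Subgroup (Equiv.Perm α)) (a : Transf α) :
    Set (Transf α) :=
  (genGA G a : Set (Transf α)) \ (Transf.ofPerm '' (G : Set (Equiv.Perm α)))

/-- The set of conjugates `a^g = g⁻¹ a g` with `g ∈ G`. -/
def conjSet {α : Type*} (G : Subgroup (Equiv.Perm α)) (a : Transf α) : Set (Transf α) :=
  (fun g : Equiv.Perm α => Transf.ofPerm g⁻¹ * a * Transf.ofPerm g) '' (G : Set (Equiv.Perm α))

/-- The subsemigroup `⟨a^g | g ∈ G⟩`. -/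
def genConj {α : Type*} (G : Subgroup (Equiv.Perm α)) (a : Transf α) :
    Subsemigroup (Transf α) :=
  Subsemigroup.closure (conjSet G a)

/-- A subset of the transformation semigroup is regular if every element `u` of it
admits `v` in the set with `u = u v u`. -/
def IsRegularSet {α : Type*} (S : Set (Transf α)) : Prop :=
  ∀ u ∈ S, ∃ v ∈ S, u * v * u = u

/-- A subset of the transformation semigroup is idempotent generated if it coincides with
the subsemigroup generated by its idempotent elements. -/
def IsIdemGen {α : Type*} (S : Set (Transf α)) : Prop :=
  S = ↑(Subsemigroup.closure {u | u ∈ S ∧ u * u = u})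

/-- `T` is a transversal for the partition `P`: it meets each class in exactly one point. -/
def IsTransversal {α : Type*} [DecidableEq α] [Fintype α] (T : Finset α)
    (P : Finpartition (Finset.univ : Finset α)) : Prop :=
  ∀ p ∈ P.parts, (T ∩ p).card = 1

/-- The universal transversal property: for every subset `I` and every partition `P`
with exactly `|I|` classes, some `G`-translate of `I` is a transversal for `P`. -/
def HasUTP {α : Type*} [DecidableEq α] [Fintype α] (G : Subgroup (Equiv.Perm α)) : Prop :=
  ∀ (I : Finset α) (P : Finpartition (Finset.univ : Finset α)),
    P.parts.card = I.card → ∃ g ∈ G, IsTransversal (I.image ⇑g) P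

namespace Transf

variable {α : Type*}

instance : Monoid (Transf α) where
  one := ⟨id⟩
  one_mul _ := rfl
  mul_one _ := rfl

theorem ofPerm_one : ofPerm (1 : Equiv.Perm α) = 1 := rfl

theorem ofPerm_mul_ofPerm (g h : Equiv.Perm α) : ofPerm g * ofPerm h = ofPerm (h * g) := rfl

theorem ofPerm_mul_ofPerm_inv_mul (g : Equiv.Perm α) (a : Transf α) :
    ofPerm g * (ofPerm g⁻¹ * a) = a := by
  rw [← mul_assoc, ofPerm_mul_ofPerm, inv_mul_cancel, ofPerm_one, one_mul]

/-- Conjugation `a ↦ a^g = g⁻¹ a g` by a permutation, as a multiplicative map. Since permutations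
compose right-to-left, `(a^g)^h` is conjugation by the permutation `h * g`. -/
def conj (g : Equiv.Perm α) : Transf α →ₙ* Transf α where
  toFun a := ofPerm g⁻¹ * a * ofPerm g
  map_mul' a b := by simp only [mul_assoc, ofPerm_mul_ofPerm_inv_mul]

theorem conj_apply (g : Equiv.Perm α) (a : Transf α) :
    conj g a = ofPerm g⁻¹ * a * ofPerm g := rfl

theorem conj_conj (g h : Equiv.Perm α) (a : Transf α) : conj h (conj g a) = conj (h * g) a := by
  simp only [conj_apply, mul_inv_rev, ← ofPerm_mul_ofPerm, mul_assoc]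

theorem ofPerm_mul_eq_conj_mul (h : Equiv.Perm α) (a : Transf α) :
    ofPerm h * a = conj h⁻¹ a * ofPerm h := by
  simp only [conj_apply, inv_inv, mul_assoc, ofPerm_mul_ofPerm, mul_inv_cancel,
    ofPerm_one, mul_one]

theorem mul_ofPerm_mul_mul_ofPerm (a b : Transf α) (g h : Equiv.Perm α) :
    a * ofPerm g * (b * ofPerm h) = a * conj g⁻¹ b * ofPerm (h * g) := by
  rw [mul_assoc, ← mul_assoc (ofPerm g), ofPerm_mul_eq_conj_mul, mul_assoc (conj _ b),
    ofPerm_mul_ofPerm, ← mul_assoc]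

theorem bijective_mul_ofPerm_iff {a : Transf α} {g : Equiv.Perm α} :
    Function.Bijective (a * ofPerm g).toFun ↔ Function.Bijective a.toFun :=
  Function.Bijective.of_comp_iff' g.bijective a.toFun

theorem injective_conj_iff {a : Transf α} {g : Equiv.Perm α} :
    Function.Injective (conj g a).toFun ↔ Function.Injective a.toFun :=
  (g.injective.of_comp_iff _).trans (Function.Injective.of_comp_iff' a.toFun g⁻¹.bijective)

theorem surjective_conj_iff {a : Transf α} {g : Equiv.Perm α} :
    Function.Surjective (conj g a).toFun ↔ Function.Surjective a.toFun :=
  (Function.Surjective.of_comp_iff' g.bijective _).trans (g⁻¹.surjective.of_comp_iff a.toFun)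

end Transf

open Transf

theorem isIdemGen_coe_iff {α : Type*} {S : Subsemigroup (Transf α)} :
    IsIdemGen (S : Set (Transf α)) ↔
      S ≤ Subsemigroup.closure {e | e ∈ S ∧ IsIdempotentElem e} :=
  ⟨fun h => h.le, fun h => Set.Subset.antisymm h (Subsemigroup.closure_le.mpr fun _ he => he.1)⟩

section

variable {α : Type*} {G : Subgroup (Equiv.Perm α)} {a : Transf α}

theorem conj_mem_genConj_self {g : Equiv.Perm α} (hg : g ∈ G) : conj g a ∈ genConj G a :=
  Subsemigroup.subset_closure ⟨g, hg, rfl⟩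

theorem self_mem_genConj : a ∈ genConj G a := conj_mem_genConj_self G.one_mem

theorem genConj_le_iff {S : Subsemigroup (Transf α)} :
    genConj G a ≤ S ↔ ∀ g ∈ G, conj g a ∈ S :=
  Subsemigroup.closure_le.trans Set.image_subset_iff

theorem conj_mem_genConj {g : Equiv.Perm α} (hg : g ∈ G) {s : Transf α} (hs : s ∈ genConj G a) :
    conj g s ∈ genConj G a := by
  suffices h : genConj G a ≤ (genConj G a).comap (conj g) from h hs
  refine genConj_le_iff.mpr fun h hh => ?_
  rw [Subsemigroup.mem_comap, conj_conj]
  exact conj_mem_genConj_self (G.mul_mem hg hh)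

theorem injective_of_mem_genConj {s : Transf α} (hs : s ∈ genConj G a)
    (h : Function.Injective s.toFun) : Function.Injective a.toFun := by
  induction hs using Subsemigroup.closure_induction with
  | mem _ hx =>
    obtain ⟨g, -, rfl⟩ := hx
    exact injective_conj_iff.mp h
  | mul _ _ _ _ ihx _ => exact ihx (Function.Injective.of_comp h)

theorem surjective_of_mem_genConj {s : Transf α} (hs : s ∈ genConj G a)
    (h : Function.Surjective s.toFun) : Function.Surjective a.toFun := by
  induction hs using Subsemigroup.closure_induction with
  | mem _ hx =>
    obtain ⟨g, -, rfl⟩ := hx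
    exact surjective_conj_iff.mp h
  | mul _ _ _ _ _ ihy => exact ihy (Function.Surjective.of_comp h)

theorem bijective_of_mem_genConj {s : Transf α} (hs : s ∈ genConj G a)
    (h : Function.Bijective s.toFun) : Function.Bijective a.toFun :=
  ⟨injective_of_mem_genConj hs h.injective, surjective_of_mem_genConj hs h.surjective⟩

/-- The product `⟨a^g | g ∈ G⟩ G`, which is a subsemigroup because `G` normalizes
`⟨a^g | g ∈ G⟩`. It serves as the description of `⟨G, a⟩ ∖ G` for singular `a`. -/
def genConjMulG (G : Subgroup (Equiv.Perm α)) (a : Transf α) : Subsemigroup (Transf α) where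
  carrier := {u | ∃ s ∈ genConj G a, ∃ h ∈ G, s * ofPerm h = u}
  mul_mem' := by
    rintro _ _ ⟨s, hs, h, hh, rfl⟩ ⟨t, ht, k, hk, rfl⟩
    exact ⟨_, mul_mem hs (conj_mem_genConj (G.inv_mem hh) ht), _, G.mul_mem hk hh,
      (mul_ofPerm_mul_mul_ofPerm s t h k).symm⟩

theorem genConj_le_genConjMulG : genConj G a ≤ genConjMulG G a :=
  fun s hs => ⟨s, hs, 1, G.one_mem, rfl⟩

theorem genConj_le_genConjMulG_of_mem {u : Transf α} (hu : u ∈ genConjMulG G a) :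
    genConj G u ≤ genConjMulG G a := by
  obtain ⟨s, hs, h, hh, rfl⟩ := hu
  refine genConj_le_iff.mpr fun g hg => ?_
  rw [map_mul]
  exact ⟨_, conj_mem_genConj hg hs, g * (h * g⁻¹),
    G.mul_mem hg (G.mul_mem hh (G.inv_mem hg)), rfl⟩

theorem mul_ofPerm_mem_genConjMulG {u : Transf α} (hu : u ∈ genConjMulG G a)
    {g : Equiv.Perm α} (hg : g ∈ G) : u * ofPerm g ∈ genConjMulG G a := by
  obtain ⟨s, hs, h, hh, rfl⟩ := hu
  exact ⟨s, hs, g * h, G.mul_mem hg hh, rfl⟩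

theorem ofPerm_mul_mem_genConjMulG {u : Transf α} (hu : u ∈ genConjMulG G a)
    {g : Equiv.Perm α} (hg : g ∈ G) : ofPerm g * u ∈ genConjMulG G a := by
  obtain ⟨s, hs, h, hh, rfl⟩ := hu
  refine ⟨_, conj_mem_genConj (G.inv_mem hg) hs, h * g, G.mul_mem hh hg, ?_⟩
  rw [← mul_assoc, ofPerm_mul_eq_conj_mul, mul_assoc, ofPerm_mul_ofPerm]

theorem ofPerm_mem_genGA {g : Equiv.Perm α} (hg : g ∈ G) : ofPerm g ∈ genGA G a :=
  Subsemigroup.subset_closure (Or.inr ⟨g, hg, rfl⟩)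

theorem genConjMulG_le_genGA : genConjMulG G a ≤ genGA G a := by
  have ha : a ∈ genGA G a := Subsemigroup.subset_closure (Or.inl rfl)
  have hconj : genConj G a ≤ genGA G a := genConj_le_iff.mpr fun g hg =>
    mul_mem (mul_mem (ofPerm_mem_genGA (G.inv_mem hg)) ha) (ofPerm_mem_genGA hg)
  rintro _ ⟨s, hs, h, hh, rfl⟩
  exact mul_mem (hconj hs) (ofPerm_mem_genGA hh)

theorem mem_image_ofPerm_or_mem_genConjMulG {u : Transf α} (hu : u ∈ genGA G a) :
    u ∈ ofPerm '' (G : Set (Equiv.Perm α)) ∨ u ∈ genConjMulG G a := by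
  induction hu using Subsemigroup.closure_induction with
  | mem x hx =>
    rcases hx with rfl | hx
    · exact Or.inr (genConj_le_genConjMulG self_mem_genConj)
    · exact Or.inl hx
  | mul x y _ _ ihx ihy =>
    rcases ihx with ⟨g, hg, rfl⟩ | hx <;> rcases ihy with ⟨k, hk, rfl⟩ | hy
    · exact Or.inl ⟨k * g, G.mul_mem hk hg, rfl⟩
    · exact Or.inr (ofPerm_mul_mem_genConjMulG hy hg)
    · exact Or.inr (mul_ofPerm_mem_genConjMulG hx hk)
    · exact Or.inr (mul_mem hx hy)

theorem not_bijective_of_mem_genConjMulG (ha : ¬ Function.Bijective a.toFun) {u : Transf α}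
    (hu : u ∈ genConjMulG G a) : ¬ Function.Bijective u.toFun := by
  obtain ⟨s, hs, h, -, rfl⟩ := hu
  exact fun hb => ha (bijective_of_mem_genConj hs (bijective_mul_ofPerm_iff.mp hb))

theorem genGAminusG_eq_genConjMulG (ha : ¬ Function.Bijective a.toFun) :
    genGAminusG G a = genConjMulG G a := by
  ext u
  constructor
  · rintro ⟨hu, huG⟩
    exact (mem_image_ofPerm_or_mem_genConjMulG hu).resolve_left huG
  · refine fun hu => ⟨genConjMulG_le_genGA hu, ?_⟩
    rintro ⟨g, -, rfl⟩
    exact not_bijective_of_mem_genConjMulG ha hu g.bijective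

theorem exists_mem_genConj_pow_eq {s : Transf α} (hs : s ∈ genConj G a) {h : Equiv.Perm α}
    (hh : h ∈ G) (m : ℕ) :
    ∃ t ∈ genConj G a, (s * ofPerm h) ^ (m + 1) = t * ofPerm (h ^ (m + 1)) := by
  induction m with
  | zero => exact ⟨s, hs, by simp only [zero_add, pow_one]⟩
  | succ m ih =>
    obtain ⟨t, ht, hpow⟩ := ih
    refine ⟨_, mul_mem ht (conj_mem_genConj (G.inv_mem (G.pow_mem hh (m + 1))) hs), ?_⟩
    rw [pow_succ, hpow, mul_ofPerm_mul_mul_ofPerm, ← pow_succ']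

theorem mem_genConj_of_isIdempotentElem (hG : IsMulTorsion G) {e : Transf α}
    (he : e ∈ genConjMulG G a) (hee : IsIdempotentElem e) : e ∈ genConj G a := by
  obtain ⟨s, hs, h, hh, rfl⟩ := he
  have hpos : 0 < orderOf h := (Submonoid.isOfFinOrder_coe.mpr (hG ⟨h, hh⟩)).orderOf_pos
  obtain ⟨t, ht, hpow⟩ := exists_mem_genConj_pow_eq hs hh (orderOf h - 1)
  rw [hee.pow_succ_eq, Nat.sub_add_cancel hpos, pow_orderOf_eq_one, ofPerm_one, mul_one] at hpow
  rwa [hpow]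

theorem isIdemGen_genConj_of_genConjMulG (hG : IsMulTorsion G)
    (H : IsIdemGen (genConjMulG G a : Set (Transf α))) :
    IsIdemGen (genConj G a : Set (Transf α)) := by
  rw [isIdemGen_coe_iff] at H ⊢
  calc genConj G a ≤ genConjMulG G a := genConj_le_genConjMulG
    _ ≤ Subsemigroup.closure {e | e ∈ genConjMulG G a ∧ IsIdempotentElem e} := H
    _ ≤ Subsemigroup.closure {e | e ∈ genConj G a ∧ IsIdempotentElem e} :=
      Subsemigroup.closure_mono fun _ he =>
        ⟨mem_genConj_of_isIdempotentElem hG he.1 he.2, he.2⟩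

theorem isIdemGen_of_forall_genConj {S : Subsemigroup (Transf α)}
    (hS : ∀ u ∈ S, genConj G u ≤ S)
    (H : ∀ u ∈ S, IsIdemGen (genConj G u : Set (Transf α))) :
    IsIdemGen (S : Set (Transf α)) := by
  refine isIdemGen_coe_iff.mpr fun u hu => ?_
  have hprod : u ∈ Subsemigroup.closure {e | e ∈ genConj G u ∧ IsIdempotentElem e} :=
    isIdemGen_coe_iff.mp (H u hu) self_mem_genConj
  refine Subsemigroup.closure_mono ?_ hprod
  exact fun _ he => ⟨hS u hu he.1, he.2⟩

end

theorem stmt3_general {α : Type*} {G : Subgroup (Equiv.Perm α)} (hG : IsMulTorsion G)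
    {A : Set (Transf α)} (hA : ∀ a ∈ A, ¬ Function.Bijective a.toFun)
    (hGA : ∀ a ∈ A, genGAminusG G a ⊆ A) :
    (∀ a ∈ A, IsIdemGen (genGAminusG G a)) ↔
      (∀ a ∈ A, IsIdemGen (genConj G a : Set (Transf α))) := by
  have hmul : ∀ a ∈ A, genGAminusG G a = genConjMulG G a :=
    fun a ha => genGAminusG_eq_genConjMulG (hA a ha)
  constructor
  · intro H a ha
    exact isIdemGen_genConj_of_genConjMulG hG (hmul a ha ▸ H a ha)
  · intro H a ha
    rw [hmul a ha]
    exact isIdemGen_of_forall_genConj (fun _ => genConj_le_genConjMulG_of_mem)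
      fun u hu => H u (hGA a ha ((hmul a ha).ge hu))

theorem stmt3 (n : ℕ) (hn : 1 ≤ n) (G : Subgroup (Equiv.Perm (Fin n))) :
    (∀ a : Transf (Fin n), ¬ Function.Bijective a.toFun →
      IsIdemGen (genGAminusG G a)) ↔
    (∀ a : Transf (Fin n), ¬ Function.Bijective a.toFun →
      IsIdemGen (genConj G a : Set (Transf (Fin n)))) := by
  exact stmt3_general (A := {a | ¬ Function.Bijective a.toFun}) isMulTorsion_of_finite (fun _ => id)
    fun a ha u hu => not_bijective_of_mem_genConjMulG ha ((genGAminusG_eq_genConjMulG ha).le hu)
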